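/- For a route with inflow demand φ equal to the route capacity z̄ := min_l f̄_l, the set of route travel times attained by consistent density vectors is exactly the interval [τ^F, τ^S]; that is, for every τ ∈ [τ^F, τ^S] there exists a consistent density vector x with Σ_l τ_l(x_l) = τ, and every consistent density vector has route travel time in [τ^F, τ^S]. -/

import Mathlib

/-!
Write `c` for the route capacity, so `c = f̄_b`.

*Consistent vectors carry the flow `c`.* If the last link's demand equals the common flow `z` and
`z` is below its capacity, then that link is in free flow, its supply equals its capacity, and so
the preceding link's demand is `z` as well (`demand_eq_of_flow`). If `z < c`, this propagates all
the way upstream and the inflow would be `c`, a contradiction; hence `z = c`. With `z = c` the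
same propagation puts every link downstream of `b` in free flow. On every link, demand and supply
are at least `c`, so the density lies between `c / v` and `x̄ - c / w`, and the link travel time
`max (L / v) (L x / (w (x̄ - x)))` is monotone there. On link `b` both bounds are the critical
density, so its travel time is the free-flow one.

*All intermediate times are attained.* A queue grows backwards from the bottleneck: the links
upstream of `b` pass, one after the other, from `c / v` to `x̄ - c / w`, where link `l` is congested
only if link `l + 1` is already at `x̄ - c / w`. Along this path (`queue`) the density vector is
consistent and the travel time varies continuously from `τ^F` to `τ^S`.
-/

/-!
Selfish routing on a single route with supply/demand (CTM) link mechanics.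
A route consists of links `0, …, n-1` (paper indices `1, …, n`).
-/

open Finset

noncomputable section

namespace SelfishRouting

/-- A route with `n` links, each specified by jam density `xbar`, capacity `fbar`,
free-flow speed `v` and length `L`, with the critical density `fbar l / v l`
strictly below the jam density. -/
structure Route (n : ℕ) where
  xbar : Fin n → ℝ
  fbar : Fin n → ℝ
  v : Fin n → ℝ
  L : Fin n → ℝ
  xbar_pos : ∀ l, 0 < xbar l
  fbar_pos : ∀ l, 0 < fbar l
  v_pos : ∀ l, 0 < v l
  L_pos : ∀ l, 0 < L l
  crit_lt_jam : ∀ l, fbar l / v l < xbar l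

namespace Route

variable {n : ℕ} (r : Route n)

/-- critical density of link `l`. -/
def xc (l : Fin n) : ℝ := r.fbar l / r.v l

/-- congestion-wave speed of link `l`. -/
def w (l : Fin n) : ℝ := r.fbar l / (r.xbar l - r.xc l)

/-- supply function of link `l`. -/
def supply (l : Fin n) (x : ℝ) : ℝ := min (r.fbar l) (r.w l * (r.xbar l - x))

/-- demand function of link `l`. -/
def demand (l : Fin n) (x : ℝ) : ℝ := min (r.v l * x) (r.fbar l)

/-- route capacity `z̄ = min_l f̄_l`. -/
def cap (hn : 0 < n) : ℝ :=
  (Finset.univ : Finset (Fin n)).inf' ⟨⟨0, hn⟩, Finset.mem_univ _⟩ r.fbar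

/-- flow `f_0` entering the first link of the route, under inflow demand `φ`. -/
def inflow (hn : 0 < n) (φ : ℝ) (x : Fin n → ℝ) : ℝ :=
  min φ (r.supply ⟨0, hn⟩ (x ⟨0, hn⟩))

/-- flow `f_{l+1}` leaving link `l`. -/
def outflow (x : Fin n → ℝ) (l : Fin n) : ℝ :=
  if h : (l : ℕ) + 1 < n then
    min (r.demand l (x l)) (r.supply ⟨(l : ℕ) + 1, h⟩ (x ⟨(l : ℕ) + 1, h⟩))
  else r.demand l (x l)

/-- `x` lies in the box `∏_l [0, x̄_l]`. -/
def InBox (x : Fin n → ℝ) : Prop := ∀ l, 0 ≤ x l ∧ x l ≤ r.xbar l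

/-- `x` is a consistent density vector for inflow demand `φ`:
all link flows `f_0 = f_1 = ⋯ = f_n` coincide. -/
def Consistent (hn : 0 < n) (φ : ℝ) (x : Fin n → ℝ) : Prop :=
  r.InBox x ∧ ∀ l, r.outflow x l = r.inflow hn φ x

/-- travel time of link `l` at density `x`. -/
def tauLink (l : Fin n) (x : ℝ) : ℝ :=
  if x = 0 then r.L l / r.v l
  else r.L l * x / min (r.v l * x) (r.w l * (r.xbar l - x))

/-- route travel time. -/
def tau (x : Fin n → ℝ) : ℝ := ∑ l, r.tauLink l (x l)

/-- free-flow route travel time. -/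
def tauF : ℝ := ∑ l, r.L l / r.v l

/-- maximal route travel time `τ^S`, given the bottleneck link `b`. -/
def tauS (hn : 0 < n) (b : Fin n) : ℝ :=
  ∑ l : Fin n, if (l : ℕ) < (b : ℕ) then r.tauLink l (r.xbar l - r.cap hn / r.w l)
       else r.L l / r.v l

end Route

end SelfishRouting

end

namespace SelfishRouting

namespace Route

variable {n : ℕ} (r : Route n)

lemma w_pos (l : Fin n) : 0 < r.w l :=
  div_pos (r.fbar_pos l) (sub_pos.2 (r.crit_lt_jam l))

lemma w_mul (l : Fin n) : r.w l * (r.xbar l - r.xc l) = r.fbar l :=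
  div_mul_cancel₀ _ (sub_pos.2 (r.crit_lt_jam l)).ne'

lemma v_mul_xc (l : Fin n) : r.v l * r.xc l = r.fbar l :=
  mul_div_cancel₀ _ (r.v_pos l).ne'

/-- On a link in free flow, the congested branch of the fundamental diagram is at or above the
capacity, so the supply equals the capacity. -/
lemma free_le_congested {l : Fin n} {x : ℝ} (hx : r.v l * x ≤ r.fbar l) :
    r.fbar l ≤ r.w l * (r.xbar l - x) := by
  have h : x ≤ r.xc l := by
    rw [← r.v_mul_xc l] at hx
    exact le_of_mul_le_mul_left hx (r.v_pos l)
  rw [← r.w_mul l]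
  exact mul_le_mul_of_nonneg_left (by linarith) (r.w_pos l).le

/-- Below the jam density, the travel time is the larger of its free-flow and congested values. -/
lemma tauLink_eq_max {l : Fin n} {x : ℝ} (h0 : 0 < x) (h1 : x < r.xbar l) :
    r.tauLink l x = max (r.L l / r.v l) (r.L l * x / (r.w l * (r.xbar l - x))) := by
  have hv := r.v_pos l
  have hw : 0 < r.w l * (r.xbar l - x) := mul_pos (r.w_pos l) (by linarith)
  have hL : 0 < r.L l * x := mul_pos (r.L_pos l) h0
  have hvx : 0 < r.v l * x := mul_pos hv h0
  have e : r.L l / r.v l = r.L l * x / (r.v l * x) := (mul_div_mul_right _ _ h0.ne').symm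
  rw [tauLink, if_neg h0.ne', e]
  rcases le_total (r.v l * x) (r.w l * (r.xbar l - x)) with h | h
  · rw [min_eq_left h, max_eq_left (div_le_div_of_nonneg_left hL.le hvx h)]
  · rw [min_eq_right h, max_eq_right (div_le_div_of_nonneg_left hL.le hw h)]

lemma le_tauLink {l : Fin n} {x : ℝ} (h0 : 0 < x) (h1 : x < r.xbar l) :
    r.L l / r.v l ≤ r.tauLink l x := by
  rw [r.tauLink_eq_max h0 h1]; exact le_max_left _ _

lemma tauLink_free {l : Fin n} {x : ℝ} (h0 : 0 < x)
    (h : r.v l * x ≤ r.w l * (r.xbar l - x)) : r.tauLink l x = r.L l / r.v l := by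
  rw [tauLink, if_neg h0.ne', min_eq_left h, mul_div_mul_right _ _ h0.ne']

lemma tauLink_mono {l : Fin n} {x y : ℝ} (h0 : 0 < x) (hxy : x ≤ y) (h1 : y < r.xbar l) :
    r.tauLink l x ≤ r.tauLink l y := by
  rw [r.tauLink_eq_max h0 (by linarith), r.tauLink_eq_max (by linarith) h1]
  have hw := r.w_pos l
  have hL := r.L_pos l
  have : 0 < r.w l * (r.xbar l - y) := mul_pos hw (by linarith)
  refine max_le_max le_rfl (div_le_div₀ ?_ ?_ this ?_)
  · exact mul_nonneg hL.le (by linarith)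
  · exact mul_le_mul_of_nonneg_left hxy hL.le
  · exact mul_le_mul_of_nonneg_left (by linarith) hw.le

lemma continuousOn_tauLink (l : Fin n) : ContinuousOn (r.tauLink l) (Set.Ioo 0 (r.xbar l)) := by
  have h : ContinuousOn
      (fun x => max (r.L l / r.v l) (r.L l * x / (r.w l * (r.xbar l - x))))
      (Set.Ioo 0 (r.xbar l)) := by
    refine ContinuousOn.sup continuousOn_const (ContinuousOn.div (by fun_prop) (by fun_prop) ?_)
    intro x hx
    exact (mul_pos (r.w_pos l) (by linarith [hx.2])).ne'
  exact h.congr fun x hx => r.tauLink_eq_max hx.1 hx.2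

lemma cap_eq (hn : 0 < n) {b : Fin n} (hb : ∀ l, l ≠ b → r.fbar b < r.fbar l) :
    r.cap hn = r.fbar b := by
  refine le_antisymm (Finset.inf'_le _ (Finset.mem_univ b)) (Finset.le_inf' _ _ fun l _ => ?_)
  rcases eq_or_ne l b with rfl | h
  · exact le_rfl
  · exact (hb l h).le

/-- Free flow propagates upstream through every link whose capacity exceeds the flow `z`. -/
lemma demand_eq_of_flow {x : Fin n → ℝ} {z : ℝ} (hx : ∀ l, r.outflow x l = z) (m : ℕ)
    (hm : ∀ l : Fin n, m < (l : ℕ) → z < r.fbar l) (l : Fin n) (hl : m ≤ (l : ℕ)) :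
    r.demand l (x l) = z := by
  obtain ⟨k, hk⟩ : ∃ k, (l : ℕ) + 1 + k = n := ⟨n - (l + 1), by omega⟩
  induction k generalizing l with
  | zero =>
    have h := hx l
    rwa [outflow, dif_neg (by omega)] at h
  | succ k ih =>
    have hlt : (l : ℕ) + 1 < n := by omega
    have hd := ih ⟨l + 1, hlt⟩ (by simp only; omega) (by simp only; omega)
    have hz := hm ⟨l + 1, hlt⟩ (by simp only; omega)
    have hs : z < r.supply ⟨l + 1, hlt⟩ (x ⟨l + 1, hlt⟩) := by
      rw [demand] at hd
      have hf : r.v ⟨l + 1, hlt⟩ * x ⟨l + 1, hlt⟩ ≤ r.fbar ⟨l + 1, hlt⟩ := by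
        by_contra! h
        rw [min_eq_right h.le] at hd
        exact hz.ne' hd
      exact lt_min hz (hz.trans_le (r.free_le_congested hf))
    have h := hx l
    rw [outflow, dif_pos hlt] at h
    rcases min_choice (r.demand l (x l)) (r.supply ⟨l + 1, hlt⟩ (x ⟨l + 1, hlt⟩)) with h' | h'
    · rw [← h', h]
    · exact absurd (h'.symm.trans h) hs.ne'

/-- At inflow demand equal to the capacity, the common flow of a consistent vector is the
capacity. -/
lemma Consistent.inflow_eq {hn : 0 < n} {b : Fin n} {x : Fin n → ℝ}
    (hb : ∀ l, l ≠ b → r.fbar b < r.fbar l) (hx : r.Consistent hn (r.fbar b) x) :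
    r.inflow hn (r.fbar b) x = r.fbar b := by
  refine le_antisymm (min_le_left _ _) ?_
  by_contra! hlt
  have hle : ∀ l, r.fbar b ≤ r.fbar l := fun l => by
    rcases eq_or_ne l b with rfl | h
    · exact le_rfl
    · exact (hb l h).le
  have hd := r.demand_eq_of_flow hx.2 0 (fun l _ => hlt.trans_le (hle l)) ⟨0, hn⟩ (Nat.zero_le _)
  have hz := hlt.trans_le (hle ⟨0, hn⟩)
  rw [demand] at hd
  have hf : r.v ⟨0, hn⟩ * x ⟨0, hn⟩ ≤ r.fbar ⟨0, hn⟩ := by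
    by_contra! h
    rw [min_eq_right h.le] at hd
    exact hz.ne' hd
  refine hlt.not_ge ?_
  exact le_min le_rfl (le_min (hle _) ((hle _).trans (r.free_le_congested hf)))

lemma le_supply_of_flow {hn : 0 < n} {φ : ℝ} {x : Fin n → ℝ} (hx : r.Consistent hn φ x)
    (l : Fin n) : r.inflow hn φ x ≤ r.supply l (x l) := by
  obtain ⟨k, hk⟩ := l
  cases k with
  | zero => exact min_le_right _ _
  | succ k =>
    have h := hx.2 ⟨k, by omega⟩
    rw [outflow, dif_pos (by simpa using hk)] at h
    rw [← h]
    exact min_le_right _ _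

lemma le_demand_of_flow {hn : 0 < n} {φ : ℝ} {x : Fin n → ℝ} (hx : r.Consistent hn φ x)
    (l : Fin n) : r.inflow hn φ x ≤ r.demand l (x l) := by
  rw [← hx.2 l, outflow]
  split_ifs
  · exact min_le_left _ _
  · exact le_rfl

/-- The jammed density `x̄ - c / w`, at which the supply equals `c`, is at least the free-flow
density `c / v` and below the jam density. -/
lemma free_le_jammed {l : Fin n} {c : ℝ} (h0 : 0 < c) (hc : c ≤ r.fbar l) :
    0 < c / r.v l ∧ c / r.v l ≤ r.xbar l - c / r.w l ∧ r.xbar l - c / r.w l < r.xbar l := by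
  have hv := r.v_pos l
  have hw := r.w_pos l
  have h1 : c / r.v l ≤ r.xc l := by rw [xc]; gcongr
  have h2 : c / r.w l ≤ r.xbar l - r.xc l := by
    rw [div_le_iff₀ hw, mul_comm, r.w_mul]; exact hc
  have h3 : 0 < c / r.w l := by positivity
  exact ⟨by positivity, by linarith, by linarith⟩

/-- The fraction of the way from free-flow to jammed density of link `l` at queue parameter `θ`:
link `l` fills up while `θ` runs through `[-l, 1 - l]`, so downstream links fill up first. -/
noncomputable def fill (θ : ℝ) (l : ℕ) : ℝ := max 0 (min 1 (θ + l))

lemma fill_nonneg (θ : ℝ) (l : ℕ) : 0 ≤ fill θ l := le_max_left _ _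

lemma fill_le_one (θ : ℝ) (l : ℕ) : fill θ l ≤ 1 := max_le zero_le_one (min_le_left _ _)

/-- Either a link is in free flow or its successor is already jammed. -/
lemma fill_succ (θ : ℝ) (l : ℕ) : fill θ l = 0 ∨ fill θ (l + 1) = 1 := by
  unfold fill
  rcases le_total (θ + l) 0 with h | h
  · exact Or.inl (max_eq_left ((min_le_right _ _).trans h))
  · right
    push_cast
    rw [min_eq_left (by linarith), max_eq_right zero_le_one]

/-- The density vector at flow `f̄_b` with a queue behind link `b`, whose extent is governed by `θ`:
no queue at `θ = -b`, and all links upstream of `b` jammed at `θ = 1`. -/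
noncomputable def queue (b : Fin n) (θ : ℝ) (l : Fin n) : ℝ :=
  r.fbar b / r.v l + if (l : ℕ) < (b : ℕ) then
    fill θ l * (r.xbar l - r.fbar b / r.w l - r.fbar b / r.v l) else 0

variable {r}

lemma queue_mem {b : Fin n} (hle : ∀ l, r.fbar b ≤ r.fbar l) (θ : ℝ) (l : Fin n) :
    r.fbar b / r.v l ≤ r.queue b θ l ∧ r.queue b θ l ≤ r.xbar l - r.fbar b / r.w l := by
  obtain ⟨-, h2, -⟩ := r.free_le_jammed (r.fbar_pos b) (hle l)
  have h0 := fill_nonneg θ l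
  have h1 := fill_le_one θ l
  unfold queue
  split_ifs <;> constructor <;> nlinarith

lemma le_demand_of_ge {l : Fin n} {c x : ℝ} (hc : c ≤ r.fbar l) (hx : c / r.v l ≤ x) :
    c ≤ r.demand l x := by
  refine le_min ?_ hc
  rwa [div_le_iff₀' (r.v_pos l)] at hx

lemma le_supply_of_le {l : Fin n} {c x : ℝ} (hc : c ≤ r.fbar l) (hx : x ≤ r.xbar l - c / r.w l) :
    c ≤ r.supply l x := by
  refine le_min hc ?_
  rw [← div_le_iff₀' (r.w_pos l)]
  linarith

lemma demand_free {l : Fin n} {c : ℝ} (hc : c ≤ r.fbar l) : r.demand l (c / r.v l) = c := by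
  rw [demand, mul_div_cancel₀ _ (r.v_pos l).ne', min_eq_left hc]

lemma supply_jammed {l : Fin n} {c : ℝ} (hc : c ≤ r.fbar l) :
    r.supply l (r.xbar l - c / r.w l) = c := by
  rw [supply, sub_sub_cancel, mul_div_cancel₀ _ (r.w_pos l).ne', min_eq_right hc]

lemma queue_consistent (hn : 0 < n) {b : Fin n} (hle : ∀ l, r.fbar b ≤ r.fbar l) (θ : ℝ) :
    r.Consistent hn (r.fbar b) (r.queue b θ) := by
  have hd := fun l => le_demand_of_ge (hle l) (queue_mem hle θ l).1
  have hs := fun l => le_supply_of_le (hle l) (queue_mem hle θ l).2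
  refine ⟨fun l => ?_, fun l => ?_⟩
  · obtain ⟨h1, -, h3⟩ := r.free_le_jammed (r.fbar_pos b) (hle l)
    have h := queue_mem hle θ l
    exact ⟨by linarith, by linarith⟩
  rw [inflow, min_eq_left (hs _)]
  have hfree : r.queue b θ l = r.fbar b / r.v l → r.demand l (r.queue b θ l) = r.fbar b :=
    fun h => by rw [h, demand_free (hle l)]
  by_cases hl : (l : ℕ) < b
  · have hlt : (l : ℕ) + 1 < n := by omega
    rw [outflow, dif_pos hlt]
    rcases Nat.lt_or_ge (l + 1) b with hl' | hl'
    · rcases fill_succ θ l with h | h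
      · rw [hfree (by simp [queue, h]), min_eq_left (hs _)]
      · have e : r.queue b θ ⟨l + 1, hlt⟩ =
            r.xbar ⟨l + 1, hlt⟩ - r.fbar b / r.w ⟨l + 1, hlt⟩ := by
          simp [queue, hl', h]
        rw [e, supply_jammed (hle _), min_eq_right (hd _)]
    -- link `l` feeds the bottleneck, whose supply never exceeds its capacity
    · have e : (⟨l + 1, hlt⟩ : Fin n) = b := Fin.ext (by simp only; omega)
      refine le_antisymm ((min_le_right _ _).trans ?_) (le_min (hd _) (hs _))
      rw [e]
      exact min_le_left _ _
  · have h := hfree (by simp [queue, hl])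
    rw [outflow]
    split_ifs
    · rw [h, min_eq_left (hs _)]
    · exact h

lemma continuous_tau_queue {b : Fin n} (hle : ∀ l, r.fbar b ≤ r.fbar l) :
    Continuous fun θ => r.tau (r.queue b θ) := by
  refine continuous_finsetSum _ fun l _ => ?_
  refine (r.continuousOn_tauLink l).comp_continuous (f := fun θ => r.queue b θ l) ?_ fun θ => ?_
  · unfold queue fill
    split_ifs <;> fun_prop
  · obtain ⟨h1, -, h3⟩ := r.free_le_jammed (r.fbar_pos b) (hle l)
    have h := queue_mem hle θ l
    exact ⟨by linarith, by linarith⟩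

lemma tauLink_free_density {l : Fin n} {c : ℝ} (h0 : 0 < c) (hc : c ≤ r.fbar l) :
    r.tauLink l (c / r.v l) = r.L l / r.v l := by
  have e : r.v l * (c / r.v l) = c := mul_div_cancel₀ _ (r.v_pos l).ne'
  have h := r.free_le_congested (l := l) (x := c / r.v l) (by rwa [e])
  exact r.tauLink_free (r.free_le_jammed h0 hc).1 ((e.trans_le hc).trans h)

lemma tau_queue_free {b : Fin n} (hle : ∀ l, r.fbar b ≤ r.fbar l) :
    r.tau (r.queue b (-(b : ℕ))) = r.tauF := by
  refine Finset.sum_congr rfl fun l _ => ?_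
  have e : r.queue b (-(b : ℕ)) l = r.fbar b / r.v l := by
    unfold queue
    split_ifs with h
    · have h' : ((l : ℕ) : ℝ) < (b : ℕ) := by exact_mod_cast h
      rw [fill, max_eq_left ((min_le_right _ _).trans (by linarith)), zero_mul, add_zero]
    · rw [add_zero]
  rw [e, tauLink_free_density (r.fbar_pos b) (hle l)]

lemma tau_queue_jammed (hn : 0 < n) {b : Fin n} (hcap : r.cap hn = r.fbar b)
    (hle : ∀ l, r.fbar b ≤ r.fbar l) : r.tau (r.queue b 1) = r.tauS hn b := by
  refine Finset.sum_congr rfl fun l _ => ?_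
  unfold queue
  rw [hcap]
  split_ifs with h
  · have : fill 1 l = 1 := by
      have : (0 : ℝ) ≤ (l : ℕ) := Nat.cast_nonneg _
      rw [fill, min_eq_left (by linarith), max_eq_right zero_le_one]
    rw [this, one_mul, add_sub_cancel]
  · rw [add_zero, tauLink_free_density (r.fbar_pos b) (hle l)]

end Route

/-- For a route with inflow demand `φ` equal to the route
capacity `z̄`, the set of route travel times attained by consistent density
vectors is exactly the interval `[τ^F, τ^S]`. -/
theorem critical_travel_time_range {n : ℕ} (hn : 0 < n) (r : Route n) (b : Fin n)
    (hb : ∀ l, l ≠ b → r.fbar b < r.fbar l)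
    (φ : ℝ) (hφ : φ = r.cap hn) :
    (∀ t : ℝ, r.tauF ≤ t → t ≤ r.tauS hn b →
      ∃ x : Fin n → ℝ, r.Consistent hn φ x ∧ r.tau x = t) ∧
    (∀ x : Fin n → ℝ, r.Consistent hn φ x →
      r.tauF ≤ r.tau x ∧ r.tau x ≤ r.tauS hn b) := by
  have hcap := r.cap_eq hn hb
  rw [hcap] at hφ
  subst hφ
  have hle : ∀ l, r.fbar b ≤ r.fbar l := fun l => by
    rcases eq_or_ne l b with rfl | h
    · exact le_rfl
    · exact (hb l h).le
  constructor
  · intro t h1 h2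
    rw [← Route.tau_queue_free hle] at h1
    rw [← Route.tau_queue_jammed hn hcap hle] at h2
    have hab : -((b : ℕ) : ℝ) ≤ 1 := by
      have : (0 : ℝ) ≤ (b : ℕ) := Nat.cast_nonneg _
      linarith
    obtain ⟨θ, -, hθ⟩ := intermediate_value_Icc hab
      (Route.continuous_tau_queue hle).continuousOn ⟨h1, h2⟩
    exact ⟨_, Route.queue_consistent hn hle θ, hθ⟩
  · intro x hx
    have hz := Route.Consistent.inflow_eq r hb hx
    have hd := r.le_demand_of_flow hx
    have hs := r.le_supply_of_flow hx
    rw [hz] at hd hs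
    have hlow : ∀ l, r.fbar b / r.v l ≤ x l := fun l => by
      rw [div_le_iff₀' (r.v_pos l)]
      exact (hd l).trans (min_le_left _ _)
    have hup : ∀ l, x l ≤ r.xbar l - r.fbar b / r.w l := fun l => by
      have h : r.fbar b / r.w l ≤ r.xbar l - x l := by
        rw [div_le_iff₀' (r.w_pos l)]
        exact (hs l).trans (min_le_right _ _)
      linarith
    have hpos : ∀ l, 0 < x l := fun l =>
      (r.free_le_jammed (r.fbar_pos b) (hle l)).1.trans_le (hlow l)
    have hjam : ∀ l, r.xbar l - r.fbar b / r.w l < r.xbar l := fun l =>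
      (r.free_le_jammed (r.fbar_pos b) (hle l)).2.2
    refine ⟨Finset.sum_le_sum fun l _ => r.le_tauLink (hpos l) ((hup l).trans_lt (hjam l)),
      Finset.sum_le_sum fun l _ => ?_⟩
    rw [hcap]
    split_ifs with hl
    · exact r.tauLink_mono (hpos l) (hup l) (hjam l)
    · refine (r.tauLink_free (hpos l) ?_).le
      rcases eq_or_ne l b with rfl | hne
      -- at the bottleneck, supply at least `f̄_b` forces a density of at most the critical one
      · have h : r.w l * (r.xbar l - r.xc l) ≤ r.w l * (r.xbar l - x l) := by
          rw [r.w_mul]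
          exact (hs l).trans (min_le_right _ _)
        have h' : x l ≤ r.xc l := by linarith [le_of_mul_le_mul_left h (r.w_pos l)]
        have h'' := mul_le_mul_of_nonneg_left h' (r.v_pos l).le
        rw [r.v_mul_xc] at h''
        exact h''.trans (r.free_le_congested h'')
      · have hdem := r.demand_eq_of_flow (fun l => (hx.2 l).trans hz) b
          (fun l hlt => hb l (by rintro rfl; omega)) l (by omega)
        have hf : r.v l * x l ≤ r.fbar l := by
          by_contra! h
          rw [Route.demand, min_eq_right h.le] at hdem
          exact (hb l hne).ne' hdem
        exact hf.trans (r.free_le_congested hf)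

end SelfishRouting
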